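/- There is no bipartite graph G = (A, B, E) such that the multiset of degrees of the vertices of B is {5,3,3,3,3,3,3}, the multiset of degrees of the vertices of A is either {5,5,5,5,3} or {5,5,5,4,4}, and some three degree-5 vertices of A all have the same neighborhood in B. -/

import Mathlib

/-!
Three vertices of `A` sharing a neighborhood of size 5 miss some vertex `b` of `B`, since
`B` has 7 vertices. The neighbors of `b` then lie among the remaining two vertices of `A`,
whereas every vertex of `B` has degree at least 3.
-/

/-- There is no bipartite graph with degree multiset of `B` equal to
`{5,3,3,3,3,3,3}`, degree multiset of `A` equal to `{5,5,5,5,3}` or `{5,5,5,4,4}`,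
in which some three degree-5 vertices of `A` all have the same neighborhood in `B`. -/
theorem stmt_11 {V : Type} [Fintype V] [DecidableEq V]
    (G : SimpleGraph V) [DecidableRel G.Adj]
    (A B : Finset V)
    (hdisj : Disjoint A B) (hcover : A ∪ B = Finset.univ)
    (hbip : ∀ u v : V, G.Adj u v → (u ∈ A ∧ v ∈ B) ∨ (u ∈ B ∧ v ∈ A))
    (hB : Multiset.map (fun v => G.degree v) B.val = {5,3,3,3,3,3,3})
    (hA : Multiset.map (fun v => G.degree v) A.val = {5,5,5,5,3} ∨
          Multiset.map (fun v => G.degree v) A.val = {5,5,5,4,4})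
    (h : ∃ a₁ ∈ A, ∃ a₂ ∈ A, ∃ a₃ ∈ A,
        a₁ ≠ a₂ ∧ a₁ ≠ a₃ ∧ a₂ ≠ a₃ ∧
        G.degree a₁ = 5 ∧ G.degree a₂ = 5 ∧ G.degree a₃ = 5 ∧
        G.neighborFinset a₁ = G.neighborFinset a₂ ∧
        G.neighborFinset a₂ = G.neighborFinset a₃) :
    False := by
  obtain ⟨a₁, h₁, a₂, h₂, a₃, h₃, h12, h13, h23, hd, -, -, hn12, hn23⟩ := h
  have hAcard : A.card = 5 := by
    rcases hA with hA | hA <;> simpa using congrArg Multiset.card hA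
  have hBcard : B.card = 7 := by simpa using congrArg Multiset.card hB
  have hBdeg : ∀ b ∈ B, 3 ≤ G.degree b := by
    intro b hb
    have hmem : G.degree b ∈ Multiset.map (fun v => G.degree v) B.val :=
      Multiset.mem_map_of_mem (fun v => G.degree v) hb
    rw [hB] at hmem
    simp at hmem
    omega
  obtain ⟨b, hb, hbn⟩ : ∃ b ∈ B, b ∉ G.neighborFinset a₁ := by
    apply Finset.exists_mem_notMem_of_card_lt_card
    rw [G.card_neighborFinset_eq_degree, hd, hBcard]
    norm_num
  have hbn2 : b ∉ G.neighborFinset a₂ := hn12 ▸ hbn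
  have hbn3 : b ∉ G.neighborFinset a₃ := hn23 ▸ hbn2
  rw [SimpleGraph.mem_neighborFinset] at hbn hbn2 hbn3
  have hsub : G.neighborFinset b ⊆ A \ {a₁, a₂, a₃} := by
    intro v hv
    rw [SimpleGraph.mem_neighborFinset] at hv
    have hvA : v ∈ A := by
      rcases hbip b v hv with ⟨hbA, -⟩ | ⟨-, hvA⟩
      · exact absurd hb (Finset.disjoint_left.mp hdisj hbA)
      · exact hvA
    simp only [Finset.mem_sdiff, Finset.mem_insert, Finset.mem_singleton]
    refine ⟨hvA, ?_⟩
    rintro (rfl | rfl | rfl)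
    exacts [hbn hv.symm, hbn2 hv.symm, hbn3 hv.symm]
  have hthree : ({a₁, a₂, a₃} : Finset V).card = 3 :=
    Finset.card_eq_three.mpr ⟨a₁, a₂, a₃, h12, h13, h23, rfl⟩
  have hsubA : ({a₁, a₂, a₃} : Finset V) ⊆ A := by
    simp [Finset.insert_subset_iff, h₁, h₂, h₃]
  have hle := Finset.card_le_card hsub
  rw [Finset.card_sdiff_of_subset hsubA, hthree, hAcard,
    G.card_neighborFinset_eq_degree] at hle
  have := hBdeg b hb
  omega
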